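/- arXiv:2103.04177 — 3 statements merged into one kernel-verified Lean document; each statement's English description precedes it below -/
import Mathlib

section
/- Let k be a real number with k ≥ 2 and let x ≥ 0 be real. Then e^x − 1 − x ≥ x^k / Γ(k+1), where Γ denotes the Gamma function. -/
open MeasureTheory Set in
lemma base_bound (s x : ℝ) (hs : 0 ≤ s) (hx : 0 ≤ x) :
    x ^ s / Real.Gamma (s + 1) ≤ Real.exp x := by
  have hG : 0 < Real.Gamma (s + 1) := Real.Gamma_pos_of_pos (by linarith)
  rw [div_le_iff₀ hG]
  have hint := Real.GammaIntegral_convergent (s := s + 1) (by linarith)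
  have hsub : Ioi x ⊆ Ioi (0 : ℝ) := Ioi_subset_Ioi hx
  have hexp : IntegrableOn (fun t : ℝ => Real.exp (-t) * x ^ s) (Ioi x) :=
    (integrableOn_exp_neg_Ioi x).mul_const _
  have h1 : ∫ t in Ioi x, Real.exp (-t) * x ^ s
      ≤ ∫ t in Ioi x, Real.exp (-t) * t ^ (s + 1 - 1) := by
    refine setIntegral_mono_on hexp (hint.mono_set hsub) measurableSet_Ioi ?_
    intro t ht
    have ht' : x < t := ht
    rw [add_sub_cancel_right]
    gcongr
  have h2 : ∫ t in Ioi x, Real.exp (-t) * t ^ (s + 1 - 1) ≤ Real.Gamma (s + 1) := by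
    rw [Real.Gamma_eq_integral (by linarith)]
    refine setIntegral_mono_set hint ?_ hsub.eventuallyLE
    filter_upwards [ae_restrict_mem measurableSet_Ioi] with t ht
    have ht' : 0 < t := ht
    simp only [Pi.zero_apply]
    positivity
  rw [integral_mul_const, integral_exp_neg_Ioi] at h1
  have h3 := h1.trans h2
  calc x ^ s = Real.exp x * (Real.exp (-x) * x ^ s) := by
        rw [← mul_assoc, ← Real.exp_add]; simp
    _ ≤ _ := by gcongr

lemma step_bound (s : ℝ) (hs : 0 ≤ s) (G g : ℝ → ℝ) (hG : ∀ x, HasDerivAt G (g x) x)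
    (h0 : G 0 = 0) (hg : ∀ x, 0 ≤ x → x ^ s / Real.Gamma (s + 1) ≤ g x)
    (x : ℝ) (hx : 0 ≤ x) : x ^ (s + 1) / Real.Gamma (s + 1 + 1) ≤ G x := by
  have hpos : 0 < Real.Gamma (s + 1) := Real.Gamma_pos_of_pos (by linarith)
  have hd : ∀ y : ℝ, HasDerivAt (fun y => G y - y ^ (s + 1) / Real.Gamma (s + 1 + 1))
      (g y - y ^ s / Real.Gamma (s + 1)) y := by
    intro y
    have h := (hG y).sub ((Real.hasDerivAt_rpow_const (x := y) (p := s + 1)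
      (Or.inr (by linarith))).div_const (Real.Gamma (s + 1 + 1)))
    refine HasDerivAt.congr_deriv h ?_
    rw [Real.Gamma_add_one (s := s + 1) (by linarith), add_sub_cancel_right]
    have : s + 1 ≠ 0 := by linarith
    field_simp
  have hm : MonotoneOn (fun y => G y - y ^ (s + 1) / Real.Gamma (s + 1 + 1)) (Set.Ici 0) := by
    refine monotoneOn_of_hasDerivWithinAt_nonneg (convex_Ici 0)
      (fun y _ => (hd y).continuousAt.continuousWithinAt)
      (fun y _ => (hd y).hasDerivWithinAt) ?_
    intro y hy
    rw [interior_Ici] at hy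
    have := hg y (le_of_lt hy)
    linarith
  have := hm (Set.mem_Ici.2 le_rfl) (Set.mem_Ici.2 hx) hx
  simp only [h0, Real.zero_rpow (show s + 1 ≠ 0 by linarith), zero_div] at this
  linarith

/-- For real `k ≥ 2` and real `x ≥ 0`, `e^x - 1 - x ≥ x^k / Γ(k+1)`. -/
theorem exp_sub_one_sub_ge_rpow_div_gamma (k x : ℝ) (hk : 2 ≤ k) (hx : 0 ≤ x) :
    x ^ k / Real.Gamma (k + 1) ≤ Real.exp x - 1 - x := by
  have h1 := step_bound (k - 2) (by linarith) (fun x => Real.exp x - 1) Real.exp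
    (fun x => (Real.hasDerivAt_exp x).sub_const 1) (by simp)
    (fun x hx => base_bound (k - 2) x (by linarith) hx)
  have h2 := step_bound (k - 2 + 1) (by linarith) (fun x => Real.exp x - 1 - x)
    (fun x => Real.exp x - 1)
    (fun x => ((Real.hasDerivAt_exp x).sub_const 1).sub (hasDerivAt_id x)) (by simp) h1 x hx
  have e : k - 2 + 1 + 1 = k := by ring
  rwa [e] at h2
end

section
/- Under the stated conditions, for every real k ≥ 2 one has ∫ |log(p/p₀)|^k dP₀ ≤ 2^{k−1} Γ(k+1) (2 + M) · h(p,p₀)², where Γ denotes the Gamma function. -/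
open MeasureTheory Real ENNReal

lemma aux_gamma (z θ : ℝ) (hz : 0 < z) (h0 : 0 < θ) (h1 : θ < 1) :
    Real.Gamma (z + 1) ≤ Real.Gamma (z + θ) * (z + θ) ^ (1 - θ) := by
  have hG : 0 < Real.Gamma (z + θ) := Real.Gamma_pos_of_pos (by linarith)
  have h := Real.Gamma_mul_add_mul_le_rpow_Gamma_mul_rpow_Gamma (s := z + θ) (t := z + θ + 1)
    (a := θ) (b := 1 - θ) (by linarith) (by linarith) h0 (by linarith) (by ring)
  have e : θ * (z + θ) + (1 - θ) * (z + θ + 1) = z + 1 := by ring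
  rw [e, Real.Gamma_add_one (s := z + θ) (by linarith), Real.mul_rpow (by linarith) hG.le] at h
  calc _ ≤ _ := h
    _ = (Real.Gamma (z + θ) ^ θ * Real.Gamma (z + θ) ^ (1 - θ)) * (z + θ) ^ (1 - θ) := by ring
    _ = _ := by rw [← Real.rpow_add hG]; simp

lemma aux_coef1 (n θ : ℝ) (hn : 2 ≤ n) (h0 : 0 < θ) (h1 : θ < 1) :
    (n + 1) ^ θ * (1 - θ) ≤ (n + θ) ^ θ := by
  have hp : 0 < (n + θ) ^ θ := Real.rpow_pos_of_pos (by linarith) _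
  have hs : (1 - θ) / (n + θ) ≤ 1 := by
    rw [div_le_one (by linarith)]; linarith
  have hs0 : 0 ≤ (1 - θ) / (n + θ) := div_nonneg (by linarith) (by linarith)
  have e : n + 1 = (n + θ) * (1 + (1 - θ) / (n + θ)) := by
    have : n + θ ≠ 0 := by linarith
    field_simp; ring
  have hb := rpow_one_add_le_one_add_mul_self (s := (1 - θ) / (n + θ)) (by linarith) h0.le h1.le
  rw [e, Real.mul_rpow (by linarith) (by linarith), mul_assoc]
  have : (1 + (1 - θ) / (n + θ)) ^ θ * (1 - θ) ≤ 1 := by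
    have : (1 + (1 - θ) / (n + θ)) ^ θ ≤ 1 + θ := by nlinarith
    nlinarith
  nlinarith

lemma aux_coef2 (n θ : ℝ) (hn : 2 ≤ n) (h0 : 0 < θ) (h1 : θ < 1) :
    (n + 1) ^ θ * θ * (n + 1 + θ) ^ (1 - θ) ≤ n + 1 := by
  have hs : θ / (n + 1) ≤ 1 := by
    rw [div_le_one (by linarith)]; linarith
  have hs0 : 0 ≤ θ / (n + 1) := div_nonneg (by linarith) (by linarith)
  have e : n + 1 + θ = (n + 1) * (1 + θ / (n + 1)) := by
    have : n + 1 ≠ 0 := by linarith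
    field_simp
  have hb := rpow_one_add_le_one_add_mul_self (s := θ / (n + 1)) (p := 1 - θ)
    (by linarith) (by linarith) (by linarith)
  rw [e, Real.mul_rpow (by linarith) (by linarith)]
  have e2 : (n + 1) ^ θ * (n + 1) ^ (1 - θ) = n + 1 := by
    rw [← Real.rpow_add (by linarith)]; simp
  have h3 : (1 + θ / (n + 1)) ^ (1 - θ) * θ ≤ 1 := by
    have : (1 + θ / (n + 1)) ^ (1 - θ) ≤ 1 + (1 - θ) := by nlinarith
    nlinarith
  calc _ = ((n + 1) ^ θ * (n + 1) ^ (1 - θ)) * ((1 + θ / (n + 1)) ^ (1 - θ) * θ) := by ring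
    _ ≤ (n + 1) * 1 := by rw [e2]; gcongr
    _ = _ := by ring

lemma aux_exp (n : ℕ) (hn : 2 ≤ n) (x : ℝ) (hx : 0 ≤ x) :
    x ^ n / n.factorial + x ^ (n + 1) / (n + 1).factorial ≤ Real.exp x - 1 - x := by
  have h := Real.sum_le_exp_of_nonneg hx (n + 2)
  rw [Finset.sum_range_succ, Finset.sum_range_succ] at h
  have h2 : ∑ i ∈ Finset.range 2, x ^ i / (i.factorial : ℝ) ≤
      ∑ i ∈ Finset.range n, x ^ i / (i.factorial : ℝ) :=
    Finset.sum_le_sum_of_subset_of_nonneg (Finset.range_mono hn)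
      (fun i _ _ => by positivity)
  simp [Finset.sum_range_succ] at h2
  linarith

lemma aux_pow_exp (k x : ℝ) (hk : 2 ≤ k) (hx : 0 ≤ x) :
    x ^ k ≤ Real.Gamma (k + 1) * (Real.exp x - 1 - x) := by
  obtain ⟨n, θ, hn, h0, h1, rfl⟩ : ∃ (n : ℕ) (θ : ℝ), 2 ≤ n ∧ 0 ≤ θ ∧ θ < 1 ∧ k = n + θ :=
    ⟨⌊k⌋₊, k - ⌊k⌋₊, Nat.le_floor (by exact_mod_cast hk),
      by linarith [Nat.floor_le (show 0 ≤ k by linarith)],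
      by linarith [Nat.lt_floor_add_one k], by ring⟩
  have hE := aux_exp n hn x hx
  have hf : (0 : ℝ) < n.factorial := by positivity
  have hn' : (2 : ℝ) ≤ n := by exact_mod_cast hn
  rcases h0.eq_or_lt with rfl | h0
  · rw [add_zero, Real.Gamma_nat_eq_factorial, Real.rpow_natCast]
    have : 0 ≤ x ^ (n + 1) / ((n + 1).factorial : ℝ) := by positivity
    have h3 : x ^ n / n.factorial ≤ Real.exp x - 1 - x := by linarith
    rw [div_le_iff₀ hf] at h3
    linarith
  set G := Real.Gamma (n + θ + 1) with hGdef
  have hG : 0 < G := Real.Gamma_pos_of_pos (by linarith)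
  have b1 : (n.factorial : ℝ) * (n + θ) ^ θ ≤ G := by
    have h := aux_gamma n θ (by linarith) h0 h1
    rw [Real.Gamma_nat_eq_factorial] at h
    have e : G = (n + θ) * Real.Gamma (n + θ) := Real.Gamma_add_one (by linarith)
    have hp : 0 ≤ ((n : ℝ) + θ) ^ θ := by positivity
    have e2 : ((n : ℝ) + θ) ^ (1 - θ) * (n + θ) ^ θ = n + θ := by
      rw [← Real.rpow_add (by linarith)]; simp
    calc _ ≤ Real.Gamma (n + θ) * (n + θ) ^ (1 - θ) * (n + θ) ^ θ := by gcongr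
      _ = G := by rw [mul_assoc, e2, e]; ring
  have b2 : (n.factorial : ℝ) * (n + 1) ≤ G * (n + 1 + θ) ^ (1 - θ) := by
    have h := aux_gamma (n + 1) θ (by linarith) h0 h1
    rw [Real.Gamma_add_one (by linarith), Real.Gamma_nat_eq_factorial] at h
    have e : (n : ℝ) + 1 + θ = n + θ + 1 := by ring
    rw [e] at h ⊢
    linarith
  have c1 : (n.factorial : ℝ) * ((n + 1) ^ θ * (1 - θ)) ≤ G :=
    le_trans (by gcongr; exact aux_coef1 n θ hn' h0 h1) b1
  have c2 : (n.factorial : ℝ) * ((n + 1) ^ θ * θ) ≤ G := by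
    have hp : 0 < ((n : ℝ) + 1 + θ) ^ (1 - θ) := by positivity
    have := aux_coef2 n θ hn' h0 h1
    refine le_of_mul_le_mul_right ?_ hp
    calc _ = (n.factorial : ℝ) * (((n : ℝ) + 1) ^ θ * θ * (n + 1 + θ) ^ (1 - θ)) := by ring
      _ ≤ (n.factorial : ℝ) * (n + 1) := by gcongr
      _ ≤ _ := b2
  set v := x / (n + 1) with hv
  have hv0 : 0 ≤ v := by positivity
  have hvx : x = (n + 1) * v := by rw [hv]; field_simp
  have hvp : v ^ θ ≤ (1 - θ) + θ * v := by
    have := rpow_one_add_le_one_add_mul_self (s := v - 1) (p := θ) (by linarith) h0.le h1.le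
    rw [add_sub_cancel] at this
    linarith
  have hxθ : (n.factorial : ℝ) * x ^ θ ≤ G * (1 + v) := by
    have : x ^ θ = (n + 1) ^ θ * v ^ θ := by
      conv_lhs => rw [hvx]
      rw [Real.mul_rpow (by positivity) hv0]
    rw [this]
    have hp : 0 ≤ ((n : ℝ) + 1) ^ θ := by positivity
    calc _ ≤ (n.factorial : ℝ) * ((n + 1) ^ θ * ((1 - θ) + θ * v)) := by gcongr
      _ = (n.factorial : ℝ) * ((n + 1) ^ θ * (1 - θ))
          + (n.factorial : ℝ) * ((n + 1) ^ θ * θ) * v := by ring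
      _ ≤ G + G * v := by gcongr
      _ = _ := by ring
  have hsum : x ^ n / n.factorial + x ^ (n + 1) / (n + 1).factorial
      = x ^ n / n.factorial * (1 + v) := by
    rw [Nat.factorial_succ, hv]; push_cast; field_simp; ring
  have hxk : x ^ ((n : ℝ) + θ) = x ^ n * x ^ θ := by
    rw [Real.rpow_add_of_nonneg hx (by linarith) h0.le, Real.rpow_natCast]
  rw [hxk]
  calc x ^ n * x ^ θ = x ^ n / n.factorial * (n.factorial * x ^ θ) := by field_simp
    _ ≤ x ^ n / n.factorial * (G * (1 + v)) := by gcongr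
    _ = G * (x ^ n / n.factorial + x ^ (n + 1) / (n + 1).factorial) := by rw [hsum]; ring
    _ ≤ _ := by gcongr

lemma aux_small (w : ℝ) (h0 : 0 ≤ w) (h1 : w ≤ 1 / 2) :
    w - Real.log (1 + w) ≤ (w / (1 + w)) ^ 2 := by
  have h := Real.le_log_one_add_of_nonneg h0
  have : w - 2 * w / (w + 2) ≤ (w / (1 + w)) ^ 2 := by
    have e : w - 2 * w / (w + 2) = w ^ 2 / (w + 2) := by field_simp; ring
    rw [e, div_pow]
    gcongr
    nlinarith
  linarith

lemma aux_g (r : ℝ) (hr : 1 ≤ r) :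
    Real.exp |Real.log r| - 1 - |Real.log r| = r - 1 - Real.log r := by
  rw [abs_of_nonneg (Real.log_nonneg hr), Real.exp_log (by linarith)]

/-- bound off `A` -/
lemma aux_off (r : ℝ) (hr0 : 0 < r) (hr : r ≤ 3 / 2) :
    2 * (Real.exp |Real.log r| - 1 - |Real.log r|) ≤ 2 * (1 - r⁻¹) ^ 2 := by
  rcases le_total 1 r with h | h
  · rw [aux_g r h]
    have := aux_small (r - 1) (by linarith) (by linarith)
    rw [add_sub_cancel] at this
    have e : (r - 1) / r = 1 - r⁻¹ := by field_simp
    rw [e] at this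
    linarith
  · have hs : 1 ≤ r⁻¹ := (one_le_inv₀ hr0).2 h
    have := aux_g r⁻¹ hs
    rw [Real.log_inv, abs_neg] at this
    rw [this]
    set s := r⁻¹
    have hl := Real.le_log_one_add_of_nonneg (x := s - 1) (by linarith)
    have hl2 : -Real.log r = Real.log (1 + (s - 1)) := by
      rw [add_sub_cancel, Real.log_inv]
    have : (s - 1) - 2 * (s - 1) / (s - 1 + 2) ≤ (s - 1) ^ 2 := by
      have e : (s - 1) - 2 * (s - 1) / (s - 1 + 2) = (s - 1) ^ 2 / (s - 1 + 2) := by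
        have : s - 1 + 2 ≠ 0 := by linarith
        field_simp; ring
      rw [e]
      exact div_le_self (sq_nonneg _) (by linarith)
    nlinarith

/-- bound on `A` -/
lemma aux_on (r c M : ℝ) (hc : 1 ≤ c) (hM : 0 < M) (hr : 1 + 1 / (2 * c) ≤ r) :
    2 * (Real.exp |Real.log r| - 1 - |Real.log r|) + 1 / c
      ≤ (2 + M) * (1 - r⁻¹) ^ 2 + r ^ 2 / M := by
  have hd0 : 0 < 1 / (2 * c) := by positivity
  have hd1 : 1 / (2 * c) ≤ 1 / 2 := by
    apply one_div_le_one_div_of_le <;> linarith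
  have hcd : 1 / c = 2 * (1 / (2 * c)) := by field_simp
  rw [hcd]
  set d := 1 / (2 * c)
  have hr0 : 0 < r := by linarith
  rw [aux_g r (by linarith)]
  have h1 := aux_small d hd0.le hd1
  have h2 : Real.log (1 + d) ≤ Real.log r := Real.log_le_log (by linarith) hr
  have h3 : (d / (1 + d)) ^ 2 ≤ (1 - r⁻¹) ^ 2 := by
    have e : d / (1 + d) = 1 - (1 + d)⁻¹ := by field_simp; ring
    have : r⁻¹ ≤ (1 + d)⁻¹ := by gcongr
    have h0 : 0 ≤ d / (1 + d) := by positivity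
    rw [e] at h0 ⊢
    gcongr
  have h4 : r - 1 = r * (1 - r⁻¹) := by field_simp
  have h5 : 2 * (r * (1 - r⁻¹)) ≤ M * (1 - r⁻¹) ^ 2 + r ^ 2 / M := by
    have : M * (1 - r⁻¹) ^ 2 + r ^ 2 / M - 2 * (r * (1 - r⁻¹))
        = (M * (1 - r⁻¹) - r) ^ 2 / M := by field_simp; ring
    have : 0 ≤ (M * (1 - r⁻¹) - r) ^ 2 / M := by positivity
    linarith
  nlinarith

lemma aux_main
    {X : Type*} [MeasurableSpace X] (P₀ : Measure X) [IsFiniteMeasure P₀]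
    (r : X → ℝ) (hr : Measurable r) (hpos : ∀ᵐ x ∂P₀, 0 < r x)
    (M : ℝ) (hM : 0 ≤ M) (c : ℝ) (hc : 1 ≤ c)
    (A : Set X) (hA : MeasurableSet A)
    (hAr : ∀ᵐ x ∂P₀, x ∈ A ↔ 1 + 1 / (2 * c) ≤ r x)
    (hb : P₀ A = 0 ∨ ENNReal.ofReal c * (∫⁻ x in A, ENNReal.ofReal (r x ^ 2) ∂P₀) ≤
          ENNReal.ofReal M * P₀ A) :
    ∫⁻ x, ENNReal.ofReal (2 * (Real.exp |Real.log (r x)| - 1 - |Real.log (r x)|)) ∂P₀ ≤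
      ENNReal.ofReal (2 + M) * ∫⁻ x, ENNReal.ofReal ((1 - (r x)⁻¹) ^ 2) ∂P₀ := by
  have hc0 : 0 < c := by linarith
  have hd1 : 1 / (2 * c) ≤ 1 / 2 := by
    apply one_div_le_one_div_of_le <;> linarith
  have hd0 : 0 < 1 / (2 * c) := by positivity
  have hmY : Measurable fun x => ENNReal.ofReal ((1 - (r x)⁻¹) ^ 2) := by fun_prop
  rw [← lintegral_add_compl _ hA, ← lintegral_add_compl (fun x => ENNReal.ofReal ((1 - (r x)⁻¹) ^ 2)) hA,
    mul_add]
  refine add_le_add ?_ ?_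
  · rcases eq_or_ne (P₀ A) 0 with h0 | h0
    · rw [setLIntegral_measure_zero _ _ h0]; exact zero_le
    have hb := hb.resolve_left h0
    have hge : P₀ A ≤ ∫⁻ x in A, ENNReal.ofReal (r x ^ 2) ∂P₀ := by
      rw [← setLIntegral_one]
      refine lintegral_mono_ae ?_
      rw [ae_restrict_iff' hA]
      filter_upwards [hAr] with x hx hxA
      have := hx.1 hxA
      rw [ENNReal.one_le_ofReal]
      nlinarith
    have hMpos : 0 < M := by
      rcases hM.eq_or_lt with rfl | h
      · exfalso
        simp only [ENNReal.ofReal_zero, zero_mul, nonpos_iff_eq_zero, mul_eq_zero,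
          ENNReal.ofReal_eq_zero] at hb
        rcases hb with hb | hb
        · linarith
        · rw [hb] at hge
          exact h0 (le_antisymm hge (zero_le))
      · exact h
    have hfinN : ENNReal.ofReal (1 / c) * P₀ A ≠ ⊤ :=
      ENNReal.mul_ne_top ENNReal.ofReal_ne_top (measure_ne_top _ _)
    have hR : ENNReal.ofReal (1 / M) * ∫⁻ x in A, ENNReal.ofReal (r x ^ 2) ∂P₀
        ≤ ENNReal.ofReal (1 / c) * P₀ A := by
      have h1 : ENNReal.ofReal (1 / c) * ENNReal.ofReal c = 1 := by
        rw [← ENNReal.ofReal_mul (by positivity), one_div_mul_cancel hc0.ne', ENNReal.ofReal_one]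
      have h2 : ENNReal.ofReal (1 / M) * ENNReal.ofReal M = 1 := by
        rw [← ENNReal.ofReal_mul (by positivity), one_div_mul_cancel hMpos.ne', ENNReal.ofReal_one]
      set I := ∫⁻ x in A, ENNReal.ofReal (r x ^ 2) ∂P₀
      calc ENNReal.ofReal (1 / M) * I
          = ENNReal.ofReal (1 / M) * (ENNReal.ofReal (1 / c) * ENNReal.ofReal c) * I := by
            rw [h1, mul_one]
        _ = ENNReal.ofReal (1 / M) * ENNReal.ofReal (1 / c) * (ENNReal.ofReal c * I) := by ring
        _ ≤ ENNReal.ofReal (1 / M) * ENNReal.ofReal (1 / c) * (ENNReal.ofReal M * P₀ A) := by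
            gcongr
        _ = (ENNReal.ofReal (1 / M) * ENNReal.ofReal M) * (ENNReal.ofReal (1 / c) * P₀ A) := by
            ring
        _ = _ := by rw [h2, one_mul]
    refine ENNReal.le_of_add_le_add_right hfinN ?_
    calc _ = ∫⁻ x in A, (ENNReal.ofReal
              (2 * (Real.exp |Real.log (r x)| - 1 - |Real.log (r x)|))
              + ENNReal.ofReal (1 / c)) ∂P₀ := by
            rw [lintegral_add_right _ measurable_const, setLIntegral_const]
      _ ≤ ∫⁻ x in A, (ENNReal.ofReal (2 + M) * ENNReal.ofReal ((1 - (r x)⁻¹) ^ 2)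
              + ENNReal.ofReal (1 / M) * ENNReal.ofReal (r x ^ 2)) ∂P₀ := by
            refine lintegral_mono_ae ?_
            rw [ae_restrict_iff' hA]
            filter_upwards [hAr] with x hx hxA
            have hon := aux_on (r x) c M hc hMpos (hx.1 hxA)
            have hg : 0 ≤ Real.exp |Real.log (r x)| - 1 - |Real.log (r x)| := by
              linarith [Real.add_one_le_exp |Real.log (r x)|]
            rw [← ENNReal.ofReal_add (by positivity) (by positivity),
              ← ENNReal.ofReal_mul (by positivity), ← ENNReal.ofReal_mul (by positivity),
              ← ENNReal.ofReal_add (by positivity) (by positivity)]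
            apply ENNReal.ofReal_le_ofReal
            convert hon using 2
            ring
      _ = ENNReal.ofReal (2 + M) * ∫⁻ x in A, ENNReal.ofReal ((1 - (r x)⁻¹) ^ 2) ∂P₀
            + ENNReal.ofReal (1 / M) * ∫⁻ x in A, ENNReal.ofReal (r x ^ 2) ∂P₀ := by
            rw [lintegral_add_left (by fun_prop), lintegral_const_mul _ (by fun_prop),
              lintegral_const_mul _ (by fun_prop)]
      _ ≤ _ := by gcongr
  · rw [← lintegral_const_mul _ hmY]
    refine lintegral_mono_ae ?_
    rw [ae_restrict_iff' hA.compl]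
    filter_upwards [hAr, hpos] with x hx hx0 hxA
    have hlt : r x < 1 + 1 / (2 * c) := by
      by_contra h
      exact hxA (hx.2 (not_lt.1 h))
    have := aux_off (r x) hx0 (by linarith)
    rw [← ENNReal.ofReal_mul (by positivity)]
    apply ENNReal.ofReal_le_ofReal
    have hsq := sq_nonneg (1 - (r x)⁻¹)
    nlinarith

/-- Under the stated conditions, for every real `k ≥ 2`,
`∫ |log(p/p₀)|^k dP₀ ≤ 2^{k-1} Γ(k+1) (2 + M) h(p,p₀)²`. -/
theorem lintegral_abs_log_ratio_rpow_le_hellinger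
    {X : Type*} [MeasurableSpace X] (μ : Measure X) [SigmaFinite μ]
    (p p₀ : X → ℝ) (hp : Measurable p) (hp₀ : Measurable p₀)
    (hpnn : ∀ x, 0 ≤ p x) (hp₀nn : ∀ x, 0 ≤ p₀ x)
    (hpden : ∫⁻ x, ENNReal.ofReal (p x) ∂μ = 1)
    (hp₀den : ∫⁻ x, ENNReal.ofReal (p₀ x) ∂μ = 1)
    (P₀ : Measure X) (hP₀ : P₀ = μ.withDensity fun x => ENNReal.ofReal (p₀ x))
    (hzero : P₀ {x | p x = 0} = 0)
    (hfin : ∫⁻ x, ENNReal.ofReal (p₀ x / p x) ∂P₀ < ⊤)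
    (M : ℝ) (hM : 0 ≤ M)
    (hMbound : ∃ c : ℝ, 1 ≤ c ∧
      (P₀ {x | (1 + 1 / (2 * c)) ^ 2 ≤ p₀ x / p x} = 0 ∨
        ENNReal.ofReal c *
            (∫⁻ x in {x | (1 + 1 / (2 * c)) ^ 2 ≤ p₀ x / p x},
              ENNReal.ofReal (p₀ x / p x) ∂P₀) ≤
          ENNReal.ofReal M * P₀ {x | (1 + 1 / (2 * c)) ^ 2 ≤ p₀ x / p x}))
    (k : ℝ) (hk : 2 ≤ k) :
    ∫⁻ x, ENNReal.ofReal (|Real.log (p x / p₀ x)| ^ k) ∂P₀ ≤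
      ENNReal.ofReal ((2 : ℝ) ^ (k - 1) * Real.Gamma (k + 1) * (2 + M)) *
        ∫⁻ x, ENNReal.ofReal ((Real.sqrt (p x) - Real.sqrt (p₀ x)) ^ 2) ∂μ := by
  obtain ⟨c, hc, hb⟩ := hMbound
  have hmd : Measurable fun x => ENNReal.ofReal (p₀ x) := by fun_prop
  have hfm : IsFiniteMeasure P₀ := by
    refine ⟨?_⟩
    rw [hP₀, withDensity_apply _ MeasurableSet.univ, Measure.restrict_univ, hp₀den]
    exact ENNReal.one_lt_top
  have hppos : ∀ᵐ x ∂P₀, 0 < p x := by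
    have : ∀ᵐ x ∂P₀, ¬ (p x = 0) := by
      rw [ae_iff]; simpa using hzero
    filter_upwards [this] with x hx
    exact lt_of_le_of_ne (hpnn x) (Ne.symm hx)
  have hp₀pos : ∀ᵐ x ∂P₀, 0 < p₀ x := by
    rw [hP₀, ae_withDensity_iff hmd]
    filter_upwards with x hx
    by_contra h
    exact hx (ENNReal.ofReal_eq_zero.2 (not_lt.1 h))
  set A : Set X := {x | (1 + 1 / (2 * c)) ^ 2 ≤ p₀ x / p x} with hAdef
  have hA : MeasurableSet A := measurableSet_le measurable_const (hp₀.div hp)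
  have hd0 : 0 < 1 / (2 * c) := by positivity
  have hsq : ∀ x, Real.sqrt (p₀ x / p x) ^ 2 = p₀ x / p x := fun x =>
    Real.sq_sqrt (div_nonneg (hp₀nn x) (hpnn x))
  have key := aux_main P₀ (fun x => Real.sqrt (p₀ x / p x)) (by fun_prop)
    (by
      filter_upwards [hppos, hp₀pos] with x h1 h2
      exact Real.sqrt_pos.2 (div_pos h2 h1)) M hM c hc A hA
    (by
      filter_upwards with x
      rw [Real.le_sqrt' (by linarith)]
      rfl)
    (by simpa only [hsq] using hb)
  have hK : 0 ≤ (2 : ℝ) ^ (k - 1) * Real.Gamma (k + 1) :=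
    mul_nonneg (by positivity) (Real.Gamma_pos_of_pos (by linarith)).le
  have step1 : ∫⁻ x, ENNReal.ofReal (|Real.log (p x / p₀ x)| ^ k) ∂P₀ ≤
      ENNReal.ofReal ((2 : ℝ) ^ (k - 1) * Real.Gamma (k + 1)) *
      ∫⁻ x, ENNReal.ofReal (2 * (Real.exp |Real.log (Real.sqrt (p₀ x / p x))| - 1
        - |Real.log (Real.sqrt (p₀ x / p x))|)) ∂P₀ := by
    rw [← lintegral_const_mul _ (by fun_prop)]
    refine lintegral_mono fun x => ?_
    rw [← ENNReal.ofReal_mul hK]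
    apply ENNReal.ofReal_le_ofReal
    have e : |Real.log (p x / p₀ x)| = 2 * |Real.log (Real.sqrt (p₀ x / p x))| := by
      rw [Real.log_sqrt (div_nonneg (hp₀nn x) (hpnn x)), abs_div, ← inv_div (p₀ x) (p x),
        Real.log_inv, abs_neg, abs_two]
      ring
    rw [e, Real.mul_rpow (by norm_num) (abs_nonneg _)]
    have h := aux_pow_exp k _ hk (abs_nonneg (Real.log (Real.sqrt (p₀ x / p x))))
    have e2 : (2 : ℝ) ^ k = 2 ^ (k - 1) * 2 := by
      rw [Real.rpow_sub_one (by norm_num)]; ring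
    rw [e2]
    calc _ ≤ (2 : ℝ) ^ (k - 1) * 2 * _ := mul_le_mul_of_nonneg_left h (by positivity)
      _ = _ := by ring
  have step3 : ∫⁻ x, ENNReal.ofReal ((1 - (Real.sqrt (p₀ x / p x))⁻¹) ^ 2) ∂P₀ ≤
      ∫⁻ x, ENNReal.ofReal ((Real.sqrt (p x) - Real.sqrt (p₀ x)) ^ 2) ∂μ := by
    rw [hP₀, lintegral_withDensity_eq_lintegral_mul _ hmd (by fun_prop)]
    refine lintegral_mono fun x => ?_
    simp only [Pi.mul_apply]
    rw [← ENNReal.ofReal_mul (hp₀nn x)]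
    apply ENNReal.ofReal_le_ofReal
    rcases (hp₀nn x).eq_or_lt with h | h
    · rw [← h, zero_mul]; positivity
    · have hs := Real.sqrt_pos.2 h
      rw [Real.sqrt_div (hp₀nn x), inv_div]
      apply le_of_eq
      nth_rewrite 1 [← Real.sq_sqrt (hp₀nn x)]
      field_simp
      ring
  calc _ ≤ _ := step1
    _ ≤ ENNReal.ofReal ((2 : ℝ) ^ (k - 1) * Real.Gamma (k + 1)) * (ENNReal.ofReal (2 + M) *
        ∫⁻ x, ENNReal.ofReal ((Real.sqrt (p x) - Real.sqrt (p₀ x)) ^ 2) ∂μ) := by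
      gcongr
      exact key.trans (by gcongr)
    _ = _ := by rw [ENNReal.ofReal_mul hK, mul_assoc]
end

section
/- Let D : X → (0,1) be measurable, let δ ≥ 0 and M ≥ 0, and assume: P₀({p_θ = 0}) = 0; ∫ (p₀/p_θ) dP₀ ≤ M; ∫ (p₀/p_θ)² dP₀ ≤ M; ∫_{B} ((1−D_θ)/(1−D)) dP₀ ≤ M · P₀(B) where B := {(1−D_θ)/(1−D) ≥ 25/16}; h_θ(1−D, 1−D_θ)² ≤ δ²; and log((1−D)/(1−D_θ)) is P₀-integrable. Then |∫ log((1−D)/(1−D_θ)) dP₀| ≤ (√2 + 2 + 25M/e) · √(2M) · δ. -/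
open MeasureTheory Real ENNReal

lemma aux_log_bound {a b : ℝ} (ha : 0 < a) (hb : 0 < b) :
    (b / a < 25 / 16 → |Real.log (a / b)| ≤ 5 / 2 * (|√a - √b| / √b)) ∧
    (25 / 16 ≤ b / a → |Real.log (a / b)| ≤ (b / a) / Real.exp 1 ∧
      1 ≤ 5 * (|√a - √b| / √b)) := by
  have hs : 0 < √a := Real.sqrt_pos.2 ha
  have ht : 0 < √b := Real.sqrt_pos.2 hb
  have hsa : √a ^ 2 = a := Real.sq_sqrt ha.le
  have htb : √b ^ 2 = b := Real.sq_sqrt hb.le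
  generalize √a = s at *
  generalize √b = t at *
  subst hsa htb
  have hlog : Real.log (s ^ 2 / t ^ 2) = 2 * Real.log (s / t) := by
    rw [← div_pow, Real.log_pow]; norm_num
  have habs : |s - t| / t = |s / t - 1| := by
    rw [← abs_of_pos ht, ← abs_div, abs_of_pos ht, sub_div, div_self ht.ne']
  constructor
  · intro h
    rw [div_lt_iff₀ (by positivity)] at h
    have h1 : t < 5 / 4 * s := by nlinarith
    rw [hlog, habs]
    have hpos : 0 < s / t := by positivity
    have hr : 4 / 5 < s / t := by rw [lt_div_iff₀ ht]; linarith
    have hup := Real.log_le_sub_one_of_pos hpos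
    have hlo := Real.one_sub_inv_le_log_of_pos hpos
    rw [abs_le]
    rcases le_total 1 (s / t) with h2 | h2
    · rw [abs_of_nonneg (by linarith)]
      have := Real.log_nonneg h2
      constructor <;> linarith
    · rw [abs_of_nonpos (by linarith)]
      have := Real.log_nonpos hpos.le h2
      have h3 : (s / t)⁻¹ ≤ 5 / 4 := by
        rw [inv_le_comm₀ hpos (by norm_num)]; linarith
      have h4 : (s / t)⁻¹ - 1 = (s / t)⁻¹ * (1 - s / t) := by
        field_simp
      have h5 : (s / t)⁻¹ * (1 - s / t) ≤ 5 / 4 * (1 - s / t) :=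
        mul_le_mul_of_nonneg_right h3 (by linarith)
      constructor <;> linarith
  · intro h
    constructor
    · have hp : 0 < t ^ 2 / s ^ 2 := by positivity
      have e1 : Real.log (s ^ 2 / t ^ 2) = - Real.log (t ^ 2 / s ^ 2) := by
        rw [← Real.log_inv, inv_div]
      rw [e1, abs_neg, abs_of_nonneg (Real.log_nonneg (by linarith))]
      have := Real.log_le_sub_one_of_pos (show 0 < (t ^ 2 / s ^ 2) / Real.exp 1 by positivity)
      rw [Real.log_div hp.ne' (Real.exp_pos 1).ne', Real.log_exp] at this
      linarith
    · rw [le_div_iff₀ (by positivity)] at h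
      have h1 : 5 / 4 * s ≤ t := by nlinarith
      rw [habs]
      have hr : s / t ≤ 4 / 5 := by rw [div_le_iff₀ ht]; linarith
      have := neg_abs_le (s / t - 1)
      linarith

/-- Under the stated conditions,
`|∫ log((1-D)/(1-D_θ)) dP₀| ≤ (√2 + 2 + 25M/e) √(2M) δ`. -/
theorem abs_integral_log_one_sub_ratio_discriminator_le
    {X : Type*} [MeasurableSpace X] (μ : Measure X) [SigmaFinite μ]
    (p₀ pθ : X → ℝ) (hp₀ : Measurable p₀) (hpθ : Measurable pθ)
    (hp₀nn : ∀ x, 0 ≤ p₀ x) (hpθnn : ∀ x, 0 ≤ pθ x)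
    (hp₀den : ∫⁻ x, ENNReal.ofReal (p₀ x) ∂μ = 1)
    (hpθden : ∫⁻ x, ENNReal.ofReal (pθ x) ∂μ = 1)
    (P₀ Pθ : Measure X)
    (hP₀ : P₀ = μ.withDensity fun x => ENNReal.ofReal (p₀ x))
    (hPθ : Pθ = μ.withDensity fun x => ENNReal.ofReal (pθ x))
    (Dθ : X → ℝ) (hDθ : Measurable Dθ)
    (hDθ_def : ∀ x, 0 < p₀ x + pθ x → Dθ x = p₀ x / (p₀ x + pθ x))
    (D : X → ℝ) (hD : Measurable D) (hD_mem : ∀ x, 0 < D x ∧ D x < 1)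
    (δ M : ℝ) (hδ : 0 ≤ δ) (hM : 0 ≤ M)
    (hpθzero : P₀ {x | pθ x = 0} = 0)
    (hratio1 : ∫⁻ x, ENNReal.ofReal (p₀ x / pθ x) ∂P₀ ≤ ENNReal.ofReal M)
    (hratio2 : ∫⁻ x, ENNReal.ofReal ((p₀ x / pθ x) ^ 2) ∂P₀ ≤ ENNReal.ofReal M)
    (htail :
      (∫⁻ x in {x | 25 / 16 ≤ (1 - Dθ x) / (1 - D x)},
          ENNReal.ofReal ((1 - Dθ x) / (1 - D x)) ∂P₀) ≤
        ENNReal.ofReal M * P₀ {x | 25 / 16 ≤ (1 - Dθ x) / (1 - D x)})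
    (hhel : ∫⁻ x, ENNReal.ofReal
          ((Real.sqrt (1 - D x) - Real.sqrt (1 - Dθ x)) ^ 2) ∂(P₀ + Pθ) ≤
      ENNReal.ofReal (δ ^ 2))
    (hint : Integrable (fun x => Real.log ((1 - D x) / (1 - Dθ x))) P₀) :
    |∫ x, Real.log ((1 - D x) / (1 - Dθ x)) ∂P₀| ≤
      (Real.sqrt 2 + 2 + 25 * M / Real.exp 1) * Real.sqrt (2 * M) * δ := by
  have hJ : ∫⁻ x, ENNReal.ofReal (|√(1 - D x) - √(1 - Dθ x)| / √(1 - Dθ x)) ∂P₀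
      ≤ ENNReal.ofReal (√M * δ) := by
    have hz : ∀ᵐ x ∂P₀, pθ x ≠ 0 := by
      rw [ae_iff]; simpa using hpθzero
    rw [hP₀, ae_withDensity_iff (by fun_prop)] at hz
    have hadd : P₀ + Pθ = μ.withDensity (fun x => ENNReal.ofReal (p₀ x + pθ x)) := by
      rw [hP₀, hPθ, ← withDensity_add_left (by fun_prop)]
      congr 1; ext x
      exact (ENNReal.ofReal_add (hp₀nn x) (hpθnn x)).symm
    rw [hadd, lintegral_withDensity_eq_lintegral_mul _ (by fun_prop) (by fun_prop)] at hhel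
    rw [hP₀, lintegral_withDensity_eq_lintegral_mul _ (by fun_prop) (by fun_prop)] at hratio1
    rw [hP₀, lintegral_withDensity_eq_lintegral_mul _ (by fun_prop) (by fun_prop)]
    set f : X → ENNReal := fun x =>
      ENNReal.ofReal (√(p₀ x + pθ x) * |√(1 - D x) - √(1 - Dθ x)|) with hf
    set g : X → ENNReal := fun x => ENNReal.ofReal (p₀ x / √(pθ x)) with hg
    have hfm : Measurable f := by fun_prop
    have hgm : Measurable g := by fun_prop
    have hf2 : ∫⁻ x, f x ^ (2:ℝ) ∂μ ≤ ENNReal.ofReal (δ ^ 2) := by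
      refine le_trans (le_of_eq (lintegral_congr fun x => ?_)) hhel
      simp only [hf, Pi.mul_apply]
      rw [ENNReal.rpow_two, ← ENNReal.ofReal_pow (by positivity),
        ← ENNReal.ofReal_mul (add_nonneg (hp₀nn x) (hpθnn x)), mul_pow, sq_abs,
        Real.sq_sqrt (add_nonneg (hp₀nn x) (hpθnn x))]
    have hg2 : ∫⁻ x, g x ^ (2:ℝ) ∂μ ≤ ENNReal.ofReal M := by
      refine le_trans (le_of_eq (lintegral_congr fun x => ?_)) hratio1
      simp only [hg, Pi.mul_apply]
      rw [ENNReal.rpow_two, ← ENNReal.ofReal_pow (div_nonneg (hp₀nn x) (Real.sqrt_nonneg _)),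
        ← ENNReal.ofReal_mul (hp₀nn x), div_pow, Real.sq_sqrt (hpθnn x)]
      congr 1; ring
    calc _ ≤ ∫⁻ x, (f * g) x ∂μ := by
          refine lintegral_mono_ae ?_
          filter_upwards [hz] with x hx
          simp only [Pi.mul_apply, hf, hg]
          rw [← ENNReal.ofReal_mul (hp₀nn x), ← ENNReal.ofReal_mul (by positivity)]
          apply ENNReal.ofReal_le_ofReal
          rcases (hp₀nn x).eq_or_lt with h0 | h0
          · simp [← h0]
          · have hpt : 0 < pθ x :=
              lt_of_le_of_ne (hpθnn x) (Ne.symm (hx (by simpa using h0)))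
            have hq : 0 < p₀ x + pθ x := by positivity
            have hb : 1 - Dθ x = pθ x / (p₀ x + pθ x) := by
              rw [hDθ_def x hq]; field_simp; ring
            have hsb : √(1 - Dθ x) = √(pθ x) / √(p₀ x + pθ x) := by
              rw [hb, Real.sqrt_div hpt.le]
            generalize |√(1 - D x) - √(1 - Dθ x)| = u
            rw [hsb]
            have := Real.sqrt_pos.2 hpt
            have := Real.sqrt_pos.2 hq
            apply le_of_eq
            field_simp
      _ ≤ (∫⁻ x, f x ^ (2:ℝ) ∂μ) ^ (1/(2:ℝ)) * (∫⁻ x, g x ^ (2:ℝ) ∂μ) ^ (1/(2:ℝ)) :=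
          ENNReal.lintegral_mul_le_Lp_mul_Lq μ Real.HolderConjugate.two_two
            hfm.aemeasurable hgm.aemeasurable
      _ ≤ (ENNReal.ofReal (δ ^ 2)) ^ (1/(2:ℝ)) * (ENNReal.ofReal M) ^ (1/(2:ℝ)) := by
          gcongr
      _ = ENNReal.ofReal (√M * δ) := by
          rw [ENNReal.ofReal_rpow_of_nonneg (by positivity) (by norm_num),
            ENNReal.ofReal_rpow_of_nonneg hM (by norm_num), ← Real.sqrt_eq_rpow,
            ← Real.sqrt_eq_rpow, Real.sqrt_sq hδ, mul_comm, ENNReal.ofReal_mul (by positivity)]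
  have hae : ∀ᵐ x ∂P₀, 0 < 1 - Dθ x := by
    have hz : ∀ᵐ x ∂P₀, pθ x ≠ 0 := by
      rw [ae_iff]; simpa using hpθzero
    filter_upwards [hz] with x hx
    have hpt : 0 < pθ x := lt_of_le_of_ne (hpθnn x) (Ne.symm hx)
    have hq : 0 < p₀ x + pθ x := add_pos_of_nonneg_of_pos (hp₀nn x) hpt
    have hb : 1 - Dθ x = pθ x / (p₀ x + pθ x) := by
      rw [hDθ_def x hq]; field_simp; ring
    rw [hb]; positivity
  set B : Set X := {x | 25 / 16 ≤ (1 - Dθ x) / (1 - D x)} with hBdef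
  have hB : MeasurableSet B := measurableSet_le (by fun_prop) (by fun_prop)
  set w : X → ℝ := fun x => |√(1 - D x) - √(1 - Dθ x)| / √(1 - Dθ x) with hw
  have hwm : Measurable w := by fun_prop
  have hPB : P₀ B ≤ ENNReal.ofReal (5 * (√M * δ)) := by
    rw [← lintegral_indicator_one hB, ENNReal.ofReal_mul (by norm_num)]
    refine le_trans ?_ (mul_le_mul_right hJ _)
    rw [← lintegral_const_mul _ (by fun_prop)]
    refine lintegral_mono_ae ?_
    filter_upwards [hae] with x hx
    by_cases hxB : x ∈ B
    · rw [Set.indicator_of_mem hxB, ← ENNReal.ofReal_mul (by norm_num), Pi.one_apply,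
        ← ENNReal.ofReal_one]
      exact ENNReal.ofReal_le_ofReal
        ((aux_log_bound (by linarith [(hD_mem x).2]) hx).2 hxB).2
    · rw [Set.indicator_of_notMem hxB]; simp
  have hmain : ∫⁻ x, ENNReal.ofReal ‖Real.log ((1 - D x) / (1 - Dθ x))‖ ∂P₀ ≤
      ENNReal.ofReal (5 / 2 * (√M * δ) + (1 / Real.exp 1) * (M * (5 * (√M * δ)))) := by
    calc _ ≤ ∫⁻ x, (ENNReal.ofReal (5 / 2) * ENNReal.ofReal (w x) +
            ENNReal.ofReal (1 / Real.exp 1) *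
              B.indicator (fun x => ENNReal.ofReal ((1 - Dθ x) / (1 - D x))) x) ∂P₀ := by
          refine lintegral_mono_ae ?_
          filter_upwards [hae] with x hx
          have hax := aux_log_bound (a := 1 - D x) (by linarith [(hD_mem x).2]) hx
          rw [Real.norm_eq_abs]
          by_cases hxB : x ∈ B
          · rw [Set.indicator_of_mem hxB, ← ENNReal.ofReal_mul (q := (1 - Dθ x) / (1 - D x)) (by positivity)]
            refine le_trans (ENNReal.ofReal_le_ofReal ?_) le_add_self
            refine (hax.2 hxB).1.trans (le_of_eq (by ring))
          · rw [Set.indicator_of_notMem hxB, mul_zero, add_zero,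
              ← ENNReal.ofReal_mul (by norm_num)]
            exact ENNReal.ofReal_le_ofReal (hax.1 (not_le.1 hxB))
      _ = ENNReal.ofReal (5 / 2) * ∫⁻ x, ENNReal.ofReal (w x) ∂P₀ +
            ENNReal.ofReal (1 / Real.exp 1) *
              ∫⁻ x in B, ENNReal.ofReal ((1 - Dθ x) / (1 - D x)) ∂P₀ := by
          rw [lintegral_add_left (by fun_prop), lintegral_const_mul _ (by fun_prop),
            lintegral_const_mul _ (Measurable.indicator (by fun_prop) hB),
            lintegral_indicator hB]
      _ ≤ ENNReal.ofReal (5 / 2) * ENNReal.ofReal (√M * δ) +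
            ENNReal.ofReal (1 / Real.exp 1) *
              (ENNReal.ofReal M * ENNReal.ofReal (5 * (√M * δ))) := by
          gcongr
          refine htail.trans ?_
          gcongr
      _ = _ := by
          rw [← ENNReal.ofReal_mul (by norm_num), ← ENNReal.ofReal_mul hM,
            ← ENNReal.ofReal_mul (by positivity), ← ENNReal.ofReal_add (by positivity)
              (by positivity)]
  have h1 := norm_integral_le_lintegral_norm (μ := P₀)
    (fun x => Real.log ((1 - D x) / (1 - Dθ x)))
  rw [Real.norm_eq_abs] at h1
  refine h1.trans ((ENNReal.toReal_le_of_le_ofReal (by positivity) hmain).trans ?_)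
  have h2 : √M ≤ √(2 * M) := Real.sqrt_le_sqrt (by linarith)
  have h3 : (1:ℝ) ≤ √2 := Real.one_le_sqrt.2 (by norm_num)
  have hc : 0 ≤ M / Real.exp 1 := by positivity
  calc _ = (5 / 2 + 5 * (M / Real.exp 1)) * √M * δ := by ring
    _ ≤ (√2 + 2 + 25 * M / Real.exp 1) * √(2 * M) * δ := by
      have h4 : 5 / 2 + 5 * (M / Real.exp 1) ≤ √2 + 2 + 25 * M / Real.exp 1 := by
        rw [mul_div_assoc]
        linarith
      exact mul_le_mul_of_nonneg_right
        (mul_le_mul h4 h2 (Real.sqrt_nonneg _) (by positivity)) hδ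
end
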